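/- arXiv:quant-ph/0307071 — 2 statements merged into one kernel-verified Lean document; each statement's English description precedes it below -/
import Mathlib

section
/- There exists N such that for all n ≥ N and every prime p the following holds. Let G be any set of at most p^{n/4} query functions g : X̂_{n,p} → {−1,+1}, and let P = {L_a ∈ 𝓛_{n,p} : L_a is p^{−n/3}-independent from every g ∈ G}. Then |P| ≥ p^{n−1} − p^{11n/12+2} (in particular P is nonempty), and for every x ∈ X̂_{n,p}, the number of f ∈ P with f(x) = 1 is at most (1/p + p^{−n/13})·|P|. Consequently, no matter which x ∈ X̂_{n,p} is output after the queries in G are answered by the value E_{y∈X̂_{n,p}}[g(y)], a predicate drawn uniformly from P makes x positive with probability at most 1/p + p^{−n/13}. -/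
/-- The domain `X̂_{n,p}`: vectors over `ℤ_p` whose last `n-1` coordinates are
not all zero. -/
def Xhat (n p : ℕ) : Set (Fin n → ZMod p) :=
  {x | ∃ i : Fin n, (i : ℕ) ≠ 0 ∧ x i ≠ 0}

/-- The positive set of the booleanized linear function `L_a`. -/
def posSet (n p : ℕ) (a : Fin n → ZMod p) : Set (Fin n → ZMod p) :=
  {x ∈ Xhat n p | ∑ i, a i * x i = 1}

/-- Expectation of `g` over the uniform distribution on the finite set `S`. -/
noncomputable def expectOn {α : Type*} (S : Set α) (g : α → ℝ) : ℝ :=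
  (∑ᶠ x ∈ S, g x) / S.ncard

/-- `L_a` is normalized: `a[0] = 1`. -/
def Normalized (n p : ℕ) (a : Fin n → ZMod p) : Prop :=
  ∀ i : Fin n, (i : ℕ) = 0 → a i = 1

/-- `L_a` is `ξ`-independent from the query function `g`. -/
def XiIndep (n p : ℕ) (a : Fin n → ZMod p) (g : (Fin n → ZMod p) → ℝ) (ξ : ℝ) : Prop :=
  |expectOn (posSet n p a) g - expectOn (Xhat n p) g| ≤ ξ

open Finset in
lemma fiber_card (p m : ℕ) [Fact p.Prime] (v : Fin m → ZMod p) (hv : v ≠ 0) (c : ZMod p) :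
    p * (univ.filter (fun y : Fin m → ZMod p => ∑ i, v i * y i = c)).card = p ^ m := by
  classical
  obtain ⟨i, hi⟩ : ∃ i, v i ≠ 0 := by
    by_contra h
    push Not at h
    exact hv (funext h)
  let f : (Fin m → ZMod p) →+ ZMod p :=
    { toFun := fun y => ∑ i, v i * y i
      map_zero' := by simp
      map_add' := by intro x y; simp [mul_add, Finset.sum_add_distrib] }
  have hf : ∀ y, f y = ∑ i, v i * y i := fun y => rfl
  have hsurj : ∀ c, c ∈ Set.range f := by
    intro c
    refine ⟨Pi.single i (c / v i), ?_⟩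
    rw [hf, Finset.sum_eq_single i]
    · simp; field_simp
    · intro b _ hb; simp [hb]
    · simp
  have h1 : ∀ d, (univ.filter (fun y : Fin m → ZMod p => f y = d)).card
      = (univ.filter (fun y : Fin m → ZMod p => f y = c)).card := by
    intro d
    exact AddMonoidHom.card_fiber_eq_of_mem_range f (hsurj d) (hsurj c)
  have h2 := Finset.card_eq_sum_card_fiberwise (f := f) (s := univ) (t := univ) (by intro x _; simp)
  simp only [h1] at h2
  simp at h2
  simp only [hf] at h2
  exact h2.symm

/-- deviation -/
noncomputable def dev (p m : ℕ) [Fact p.Prime] (g : ZMod p → (Fin m → ZMod p) → ℝ)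
    (a : Fin m → ZMod p) : ℝ :=
  ∑ w ∈ Finset.univ.filter (fun w : Fin m → ZMod p => w ≠ 0),
    (g (1 - ∑ i, a i * w i) w - (∑ t, g t w) / p)

open Finset in
lemma cardW (p m : ℕ) [Fact p.Prime] :
    ((univ.filter (fun w : Fin m → ZMod p => w ≠ 0)).card : ℝ) = (p : ℝ) ^ m - 1 := by
  classical
  have h : (univ.filter (fun w : Fin m → ZMod p => w ≠ 0)) = univ.erase 0 := by
    ext; simp
  rw [h, Finset.cast_card_erase_of_mem (by simp)]
  simp

open Finset in
lemma gram (p m : ℕ) [Fact p.Prime] (a b : Fin m → ZMod p) :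
    ∑ w ∈ univ.filter (fun w : Fin m → ZMod p => w ≠ 0), ∑ t : ZMod p,
      ((if t = 1 - ∑ i, a i * w i then (1:ℝ) else 0) - 1 / p) *
      ((if t = 1 - ∑ i, b i * w i then (1:ℝ) else 0) - 1 / p)
    = (1 - 1 / (p:ℝ)) * ((if a = b then (p:ℝ) ^ m else 0) - 1) := by
  classical
  have hp : (p : ℝ) ≠ 0 := by exact_mod_cast (Fact.out : p.Prime).ne_zero
  have h1 : ∀ w : Fin m → ZMod p, ∑ t : ZMod p,
      ((if t = 1 - ∑ i, a i * w i then (1:ℝ) else 0) - 1 / p) *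
      ((if t = 1 - ∑ i, b i * w i then (1:ℝ) else 0) - 1 / p)
      = (if ∑ i, (a - b) i * w i = 0 then (1:ℝ) else 0) - 1 / p := by
    intro w
    have h : ∀ t : ZMod p, ((if t = 1 - ∑ i, a i * w i then (1:ℝ) else 0) - 1 / p) *
      ((if t = 1 - ∑ i, b i * w i then (1:ℝ) else 0) - 1 / p)
      = (if t = 1 - ∑ i, a i * w i then (if t = 1 - ∑ i, b i * w i then (1:ℝ) else 0) else 0)
        - (1 / p) * (if t = 1 - ∑ i, a i * w i then (1:ℝ) else 0)
        - (1 / p) * (if t = 1 - ∑ i, b i * w i then (1:ℝ) else 0) + (1/p) * (1 / p) := by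
      intro t
      split_ifs <;> ring
    simp only [h]
    rw [Finset.sum_add_distrib, Finset.sum_sub_distrib, Finset.sum_sub_distrib,
      ← Finset.mul_sum, ← Finset.mul_sum]
    simp only [Finset.sum_ite_eq', Finset.mem_univ, if_true]
    have e : (1 - ∑ i, a i * w i = 1 - ∑ i, b i * w i) ↔ ∑ i, (a - b) i * w i = 0 := by
      simp only [Pi.sub_apply, sub_mul, Finset.sum_sub_distrib]
      constructor
      · intro h; linear_combination -h
      · intro h; linear_combination -h
    simp only [e]
    simp
    field_simp
    ring
  simp only [h1]
  rw [Finset.sum_sub_distrib]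
  simp only [Finset.sum_const, nsmul_eq_mul, cardW]
  rw [← Finset.sum_filter]
  simp only [Finset.sum_const, nsmul_eq_mul, mul_one]
  rw [Finset.filter_filter]
  by_cases hab : a = b
  · subst hab
    have := cardW p m
    simp only [ne_eq] at this
    simp [this]
    ring
  · have hv : a - b ≠ 0 := sub_ne_zero.mpr hab
    have h2 := fiber_card p m (a - b) hv 0
    have h3 : (univ.filter (fun w : Fin m → ZMod p => w ≠ 0 ∧ ∑ i, (a - b) i * w i = 0))
      = (univ.filter (fun y : Fin m → ZMod p => ∑ i, (a - b) i * y i = 0)).erase 0 := by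
      ext; simp
    rw [h3, Finset.cast_card_erase_of_mem (by simp)]
    have h4 : (p:ℝ) * ((univ.filter (fun y : Fin m → ZMod p => ∑ i, (a - b) i * y i = 0)).card : ℝ)
      = (p:ℝ) ^ m := by exact_mod_cast h2
    rw [← h4]
    simp only [hab, if_false]
    field_simp
    ring

open Finset in
lemma dev_sq (p m : ℕ) [Fact p.Prime] (g : ZMod p → (Fin m → ZMod p) → ℝ)
    (hg : ∀ t w, w ≠ 0 → g t w ^ 2 = 1) :
    ∑ a, dev p m g a ^ 2 ≤ (p:ℝ) ^ m * (p * ((p:ℝ) ^ m - 1)) := by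
  classical
  have hp : (1 : ℝ) ≤ p := by exact_mod_cast (Fact.out : p.Prime).one_le
  have hp0 : (p : ℝ) ≠ 0 := by positivity
  set W := univ.filter (fun w : Fin m → ZMod p => w ≠ 0) with hW
  set h : (Fin m → ZMod p) → (Fin m → ZMod p) × ZMod p → ℝ := fun a x =>
    (if x.2 = 1 - ∑ i, a i * x.1 i then (1:ℝ) else 0) - 1 / p with hh
  have hK : ∀ a b, ∑ x ∈ W ×ˢ univ, h a x * h b x
      = (1 - 1 / (p:ℝ)) * ((if a = b then (p:ℝ) ^ m else 0) - 1) := by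
    intro a b
    rw [← gram, Finset.sum_product]
  have hd : ∀ a, dev p m g a = ∑ x ∈ W ×ˢ univ, h a x * g x.2 x.1 := by
    intro a
    rw [Finset.sum_product, dev]
    refine Finset.sum_congr rfl fun w _ => ?_
    simp only [hh, sub_mul, Finset.sum_sub_distrib, ite_mul, one_mul, zero_mul,
      Finset.sum_ite_eq', Finset.mem_univ, if_true, ← Finset.mul_sum]
    ring
  set d := dev p m g
  set T := ∑ a, d a ^ 2 with hT
  have hT0 : 0 ≤ T := Finset.sum_nonneg fun _ _ => sq_nonneg _
  have e1 : T = ∑ x ∈ W ×ˢ univ, (∑ a, d a * h a x) * g x.2 x.1 := by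
    simp only [Finset.sum_mul]
    rw [Finset.sum_comm, hT]
    refine Finset.sum_congr rfl fun a _ => ?_
    rw [sq]
    nth_rewrite 2 [hd a]
    rw [Finset.mul_sum]
    exact Finset.sum_congr rfl fun _ _ => by ring
  have e2 : ∑ x ∈ W ×ˢ univ, (∑ a, d a * h a x) ^ 2 ≤ (p:ℝ) ^ m * T := by
    have : ∑ x ∈ W ×ˢ univ, (∑ a, d a * h a x) ^ 2
        = ∑ a, ∑ b, d a * d b * ((1 - 1 / (p:ℝ)) * ((if a = b then (p:ℝ) ^ m else 0) - 1)) := by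
      simp only [sq, Finset.sum_mul_sum]
      rw [Finset.sum_comm]
      refine Finset.sum_congr rfl fun a _ => ?_
      rw [Finset.sum_comm]
      refine Finset.sum_congr rfl fun b _ => ?_
      rw [← hK, Finset.mul_sum]
      exact Finset.sum_congr rfl fun _ _ => by ring
    rw [this]
    have h5 : ∑ a, ∑ b, d a * d b * ((1 - 1 / (p:ℝ)) * ((if a = b then (p:ℝ) ^ m else 0) - 1))
      = (1 - 1 / (p:ℝ)) * ((p:ℝ)^m * T - (∑ a, d a) ^ 2) := by
      rw [sq, Finset.sum_mul_sum, hT, Finset.mul_sum, ← Finset.sum_sub_distrib, Finset.mul_sum]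
      refine Finset.sum_congr rfl fun a _ => ?_
      have : ∀ b, d a * d b * ((1 - 1 / (p:ℝ)) * ((if a = b then (p:ℝ) ^ m else 0) - 1))
        = (1 - 1 / (p:ℝ)) * ((if a = b then (p:ℝ) ^ m * (d a * d b) else 0) - d a * d b) := by
        intro b; split_ifs <;> ring
      simp only [this]
      rw [← Finset.mul_sum, Finset.sum_sub_distrib]
      simp [sq]
    rw [h5]
    have h6 : 0 ≤ 1 / (p:ℝ) := by positivity
    have h7 : 1 / (p:ℝ) ≤ 1 := by rw [div_le_one (by positivity)]; exact hp
    have h8 : 0 ≤ (p:ℝ)^m * T := by positivity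
    nlinarith [sq_nonneg (∑ a, d a), mul_nonneg h6 h8, mul_nonneg (sub_nonneg.2 h7) (sq_nonneg (∑ a, d a))]
  have e3 : ∑ x ∈ W ×ˢ (univ : Finset (ZMod p)), (g x.2 x.1) ^ 2 = p * ((p:ℝ) ^ m - 1) := by
    have : ∀ x ∈ W ×ˢ (univ : Finset (ZMod p)), (g x.2 x.1) ^ 2 = 1 := by
      intro x hx
      simp [hW] at hx
      exact hg _ _ hx
    rw [Finset.sum_congr rfl this]
    simp only [Finset.sum_const, Finset.card_product, nsmul_eq_mul, mul_one, Nat.cast_mul, hW,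
      cardW]
    simp [ZMod.card]
    ring
  have e4 := Finset.sum_mul_sq_le_sq_mul_sq (W ×ˢ univ) (fun x => ∑ a, d a * h a x)
    (fun x => g x.2 x.1)
  rw [← e1, e3] at e4
  have hM : 0 ≤ (p:ℝ) * ((p:ℝ) ^ m - 1) := by
    have := one_le_pow₀ (n := m) hp
    apply mul_nonneg <;> linarith
  have e5 : T ^ 2 ≤ (p:ℝ) ^ m * T * (p * ((p:ℝ) ^ m - 1)) :=
    e4.trans (mul_le_mul_of_nonneg_right e2 hM)
  rcases hT0.eq_or_lt with h0 | h0
  · rw [← h0]; positivity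
  · nlinarith

open Finset in
lemma bad_card (p m : ℕ) [Fact p.Prime] (hm : 1 ≤ m) (g : ZMod p → (Fin m → ZMod p) → ℝ)
    (hg : ∀ t w, w ≠ 0 → g t w ^ 2 = 1) (ξ : ℝ) (hξ : 0 < ξ) :
    ((univ.filter (fun a => ¬ |dev p m g a / ((p:ℝ)^m - 1)| ≤ ξ)).card : ℝ)
      ≤ (p:ℝ) ^ 2 / ξ ^ 2 := by
  have hp : (2 : ℝ) ≤ p := by exact_mod_cast (Fact.out : p.Prime).two_le
  have hpm : (p:ℝ) ≤ (p:ℝ)^m := by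
    calc (p:ℝ) = p ^ 1 := by ring
      _ ≤ _ := pow_le_pow_right₀ (by linarith) hm
  set M := (p:ℝ)^m - 1 with hM
  have hM0 : 0 < M := by linarith
  have h1 := dev_sq p m g hg
  rw [← hM] at h1
  set B := univ.filter (fun a => ¬ |dev p m g a / M| ≤ ξ) with hB
  have h2 : (B.card : ℝ) * (ξ * M) ^ 2 ≤ ∑ a, dev p m g a ^ 2 := by
    rw [← nsmul_eq_mul, ← Finset.sum_const]
    calc _ ≤ ∑ a ∈ B, dev p m g a ^ 2 := by
          apply Finset.sum_le_sum
          intro a ha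
          simp only [hB, mem_filter, not_le] at ha
          have h := ha.2
          rw [abs_div, abs_of_pos hM0, lt_div_iff₀ hM0] at h
          rw [← sq_abs (dev p m g a)]
          exact pow_le_pow_left₀ (by positivity) h.le 2
      _ ≤ _ := Finset.sum_le_univ_sum_of_nonneg fun _ => sq_nonneg _
  rw [le_div_iff₀ (by positivity)]
  have h3 : (B.card : ℝ) * ξ^2 * M * M ≤ (p:ℝ)^m * p * M := by nlinarith
  have h4 := le_of_mul_le_mul_right h3 hM0
  have h5 : (p:ℝ)^m ≤ p * M := by nlinarith
  have h6 : (B.card : ℝ) * ξ^2 * M ≤ (p:ℝ)^2 * M := by nlinarith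
  exact le_of_mul_le_mul_right h6 hM0

lemma Xhat_eq (m p : ℕ) : Xhat (m+1) p =
    (fun x : ZMod p × (Fin m → ZMod p) => (Fin.cons x.1 x.2 : Fin (m+1) → ZMod p)) ''
      {x | x.2 ≠ 0} := by
  ext x
  simp only [Xhat, Set.mem_setOf_eq, Set.mem_image]
  constructor
  · rintro ⟨i, hi, hx⟩
    refine ⟨(x 0, Fin.tail x), ?_, by simp⟩
    intro h
    obtain ⟨j, rfl⟩ := Fin.exists_succ_eq.2 (show i ≠ 0 by rintro rfl; simp at hi)
    exact hx (congrFun h j)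
  · rintro ⟨⟨t, w⟩, hw, rfl⟩
    obtain ⟨j, hj⟩ := Function.ne_iff.1 hw
    exact ⟨j.succ, by simp, by simpa using hj⟩

lemma posSet_eq (m p : ℕ) (a : Fin m → ZMod p) : posSet (m+1) p (Fin.cons 1 a) =
    (fun w : Fin m → ZMod p => (Fin.cons (1 - ∑ i, a i * w i) w : Fin (m+1) → ZMod p)) ''
      {w | w ≠ 0} := by
  ext x
  simp only [posSet, Xhat_eq, Set.mem_setOf_eq, Set.mem_image]
  constructor
  · rintro ⟨⟨⟨t, w⟩, hw, rfl⟩, h⟩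
    refine ⟨w, hw, ?_⟩
    simp [Fin.sum_univ_succ] at h
    rw [← h]; simp
  · rintro ⟨w, hw, rfl⟩
    refine ⟨⟨(_, w), hw, rfl⟩, ?_⟩
    simp [Fin.sum_univ_succ]

open Finset in
lemma expect_eq (m p : ℕ) [Fact p.Prime] (a : Fin m → ZMod p) (g : (Fin (m+1) → ZMod p) → ℝ) :
    expectOn (posSet (m+1) p (Fin.cons 1 a)) g - expectOn (Xhat (m+1) p) g
      = dev p m (fun t w => g (Fin.cons t w)) a / ((p:ℝ)^m - 1) := by
  classical
  have hp : (p : ℝ) ≠ 0 := by exact_mod_cast (Fact.out : p.Prime).ne_zero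
  have i1 : Function.Injective (fun w : Fin m → ZMod p =>
      (Fin.cons (1 - ∑ i, a i * w i) w : Fin (m+1) → ZMod p)) := by
    intro x y h
    exact (Fin.cons_inj.1 h).2
  have i2 : Function.Injective (fun x : ZMod p × (Fin m → ZMod p) =>
      (Fin.cons x.1 x.2 : Fin (m+1) → ZMod p)) := by
    rintro ⟨x, x'⟩ ⟨y, y'⟩ h
    have := Fin.cons_inj.1 h
    simpa using this
  set W := univ.filter (fun w : Fin m → ZMod p => w ≠ 0) with hW
  have s1 : {w : Fin m → ZMod p | w ≠ 0} = (W : Set (Fin m → ZMod p)) := by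
    ext; simp [hW]
  have s2 : {x : ZMod p × (Fin m → ZMod p) | x.2 ≠ 0} =
      ((univ ×ˢ W : Finset (ZMod p × (Fin m → ZMod p))) : Set (ZMod p × (Fin m → ZMod p))) := by
    ext; simp [hW]
  have c : (W.card : ℝ) = (p:ℝ)^m - 1 := cardW p m
  rw [expectOn, expectOn, posSet_eq, Xhat_eq, finsum_mem_image i1.injOn, finsum_mem_image i2.injOn,
    Set.ncard_image_of_injective _ i1, Set.ncard_image_of_injective _ i2, s1, s2,
    finsum_mem_coe_finset, finsum_mem_coe_finset, Set.ncard_coe_finset, Set.ncard_coe_finset,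
    Finset.card_product, dev, Finset.sum_sub_distrib, Finset.sum_product_right, ← hW,
    ← Finset.sum_div]
  push_cast
  rw [c]
  simp only [Finset.card_univ, ZMod.card]
  rw [sub_div, div_div]

open Finset in
lemma main_aux (m p : ℕ) [Fact p.Prime] (hm : 1000 ≤ m)
    (G : Finset ((Fin (m+1) → ZMod p) → ℝ))
    (hG : ∀ g ∈ G, ∀ x ∈ Xhat (m+1) p, g x = 1 ∨ g x = -1)
    (ξ K : ℝ) (hξ : 0 < ξ) (hK : (G.card : ℝ) * ((p:ℝ)^2 / ξ^2) ≤ K)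
    (P : Set (Fin (m+1) → ZMod p))
    (hP : P = {a | Normalized (m+1) p a ∧ ∀ g ∈ G, XiIndep (m+1) p a g ξ}) :
    (p:ℝ)^m - K ≤ P.ncard ∧ ∀ x ∈ Xhat (m+1) p,
      (p:ℝ) * ({a ∈ P | ∑ i, a i * x i = 1}).ncard ≤ (p:ℝ)^m := by
  classical
  let B := fun g : (Fin (m+1) → ZMod p) → ℝ =>
    univ.filter (fun a => ¬ |dev p m (fun t w => g (Fin.cons t w)) a / ((p:ℝ)^m - 1)| ≤ ξ)
  have hB : ∀ g ∈ G, ((B g).card : ℝ) ≤ (p:ℝ)^2 / ξ^2 := by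
    intro g hg
    refine bad_card p m (by omega) _ ?_ ξ hξ
    intro t w hw
    have : (Fin.cons t w : Fin (m+1) → ZMod p) ∈ Xhat (m+1) p := by
      rw [Xhat_eq]; exact ⟨(t, w), hw, rfl⟩
    rcases hG g hg _ this with h | h <;> simp [h]
  have hinj : Function.Injective (fun a : Fin m → ZMod p => (Fin.cons 1 a : Fin (m+1) → ZMod p)) := by
    intro x y h
    exact (Fin.cons_inj.1 h).2
  have hPe : P = (fun a : Fin m → ZMod p => (Fin.cons 1 a : Fin (m+1) → ZMod p)) ''
      ((univ \ G.biUnion B : Finset (Fin m → ZMod p)) : Set (Fin m → ZMod p)) := by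
    rw [hP]
    ext a
    simp only [Set.mem_setOf_eq, Set.mem_image, Finset.mem_coe, Finset.mem_sdiff, Finset.mem_univ,
      true_and, Finset.mem_biUnion, not_exists, not_and, B, Finset.mem_filter, not_not]
    constructor
    · rintro ⟨h1, h2⟩
      have ha : (Fin.cons 1 (Fin.tail a) : Fin (m+1) → ZMod p) = a := by
        rw [← h1 0 rfl]; simp
      refine ⟨Fin.tail a, fun g hg => ?_, ha⟩
      have := h2 g hg
      rw [← ha, XiIndep, expect_eq] at this
      exact this
    · rintro ⟨b, hb, rfl⟩
      refine ⟨?_, fun g hg => ?_⟩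
      · intro i hi
        obtain rfl : i = 0 := Fin.ext hi
        simp
      · rw [XiIndep, expect_eq]
        exact hb g hg
  constructor
  · rw [hPe, Set.ncard_image_of_injective _ hinj, Set.ncard_coe_finset,
      Finset.cast_card_sdiff (Finset.subset_univ _)]
    have h1 : ((G.biUnion B).card : ℝ) ≤ K := by
      calc ((G.biUnion B).card : ℝ) ≤ ∑ g ∈ G, ((B g).card : ℝ) := by
            exact_mod_cast Finset.card_biUnion_le
        _ ≤ ∑ g ∈ G, (p:ℝ)^2 / ξ^2 := Finset.sum_le_sum hB
        _ = (G.card : ℝ) * ((p:ℝ)^2 / ξ^2) := by simp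
        _ ≤ K := hK
    simp
    linarith
  · intro x hx
    rw [Xhat_eq] at hx
    obtain ⟨⟨t, w⟩, hw, rfl⟩ := hx
    have hsub : {a ∈ P | ∑ i, a i * (Fin.cons t w : Fin (m+1) → ZMod p) i = 1} ⊆
        (fun a : Fin m → ZMod p => (Fin.cons 1 a : Fin (m+1) → ZMod p)) ''
        ((univ.filter (fun y : Fin m → ZMod p => ∑ i, w i * y i = 1 - t) : Finset _) :
          Set (Fin m → ZMod p)) := by
      rintro a ⟨ha, h⟩
      rw [hPe] at ha
      obtain ⟨b, _, rfl⟩ := ha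
      refine ⟨b, ?_, rfl⟩
      simp [Fin.sum_univ_succ] at h
      simp [← h, mul_comm]
    have h1 := Set.ncard_le_ncard hsub (Set.toFinite _)
    rw [Set.ncard_image_of_injective _ hinj, Set.ncard_coe_finset] at h1
    have h2 := fiber_card p m w hw (1 - t)
    have h3 := (Nat.mul_le_mul_left p h1).trans_eq h2
    exact_mod_cast h3

/-- after at most `p^(n/4)` queries, each answered with the domain
average, the surviving candidate set `P` of normalized booleanized linear
functions has at least `p^(n-1) - p^(11n/12+2)` elements, and every point of
`X̂_{n,p}` is positive for at most a `(1/p + p^(-n/13))` fraction of `P`. -/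
theorem stmt3 : ∃ N : ℕ, ∀ n : ℕ, N ≤ n → ∀ p : ℕ, p.Prime →
    ∀ G : Finset ((Fin n → ZMod p) → ℝ),
    (∀ g ∈ G, ∀ x ∈ Xhat n p, g x = 1 ∨ g x = -1) →
    (G.card : ℝ) ≤ (p : ℝ) ^ ((n : ℝ) / 4) →
    ∀ P : Set (Fin n → ZMod p),
    P = {a | Normalized n p a ∧
          ∀ g ∈ G, XiIndep n p a g ((p : ℝ) ^ (-(n : ℝ) / 3))} →
    ((P.ncard : ℝ) ≥ (p : ℝ) ^ ((n : ℝ) - 1) - (p : ℝ) ^ (11 * (n : ℝ) / 12 + 2)) ∧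
    P.Nonempty ∧
    ∀ x ∈ Xhat n p,
      (({a ∈ P | ∑ i, a i * x i = 1}).ncard : ℝ)
        ≤ (1 / (p : ℝ) + (p : ℝ) ^ (-(n : ℝ) / 13)) * P.ncard := by
  refine ⟨2000, ?_⟩
  intro n hn p hp G hG hGc P hP
  haveI : Fact p.Prime := ⟨hp⟩
  obtain ⟨m, rfl⟩ : ∃ m, n = m + 1 := ⟨n - 1, by omega⟩
  have hp2 : (2:ℝ) ≤ p := by exact_mod_cast hp.two_le
  have hp0 : (0:ℝ) < p := by linarith
  have hp1 : (1:ℝ) ≤ p := by linarith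
  set N : ℝ := ((m + 1 : ℕ) : ℝ) with hN
  have hN2 : (2000:ℝ) ≤ N := by rw [hN]; exact_mod_cast hn
  have hpm : (p:ℝ) ^ m = (p:ℝ) ^ (N - 1) := by
    rw [← Real.rpow_natCast]; congr 1; rw [hN]; push_cast; ring
  have hK : (G.card : ℝ) * ((p:ℝ)^2 / ((p : ℝ) ^ (-N / 3))^2) ≤ (p : ℝ) ^ (11 * N / 12 + 2) := by
    have : (p : ℝ) ^ (11 * N / 12 + 2) = (p:ℝ) ^ (N/4) * ((p:ℝ)^2 / ((p : ℝ) ^ (-N / 3))^2) := by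
      rw [← Real.rpow_natCast, ← Real.rpow_natCast, ← Real.rpow_mul hp0.le, ← Real.rpow_sub hp0,
        ← Real.rpow_add hp0]
      congr 1; push_cast; ring
    rw [this]
    exact mul_le_mul_of_nonneg_right hGc (by positivity)
  obtain ⟨h1, h2⟩ := main_aux m p (by omega) G hG _ _ (by positivity) hK P hP
  rw [hpm] at h1 h2
  refine ⟨h1, ?_, ?_⟩
  · apply Set.nonempty_of_ncard_ne_zero
    have : (p : ℝ) ^ (11 * N / 12 + 2) < (p:ℝ) ^ (N - 1) :=
      Real.rpow_lt_rpow_of_exponent_lt (by linarith) (by linarith)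
    have : (0:ℝ) < P.ncard := by linarith
    exact_mod_cast this.ne'
  · intro x hx
    have h3 := h2 x hx
    refine le_trans ?_ (mul_le_mul_of_nonneg_left h1 (by positivity))
    refine le_trans (b := (p:ℝ) ^ (N - 1) / p) ((le_div_iff₀' hp0).2 h3) ?_
    set A := (p:ℝ) ^ (N - 1)
    set K := (p : ℝ) ^ (11 * N / 12 + 2)
    set ε := (p : ℝ) ^ (-N / 13)
    have hA : 0 < A := by positivity
    have hKp : 0 < K := by positivity
    have hε1 : ε ≤ 1 := Real.rpow_le_one_of_one_le_of_nonpos hp1 (by linarith)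
    have hip : 1 / (p:ℝ) ≤ 1 := by rw [div_le_one hp0]; exact hp1
    have hεA : 2 * K ≤ ε * A := by
      calc 2 * K ≤ p * K := by gcongr
        _ = (p:ℝ) ^ (1 + (11 * N / 12 + 2)) := by rw [Real.rpow_add hp0, Real.rpow_one]
        _ ≤ (p:ℝ) ^ (-N/13 + (N - 1)) := Real.rpow_le_rpow_of_exponent_le hp1 (by linarith)
        _ = ε * A := by rw [Real.rpow_add hp0]
    have : A / p = 1 / p * A := by ring
    rw [this]
    have k1 := mul_le_mul_of_nonneg_right hε1 hKp.le
    have k2 := mul_le_mul_of_nonneg_right hip hKp.le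
    have k3 : (1 / (p:ℝ) + ε) * (A - K) = 1 / p * A + ε * A - (1 / p * K) - ε * K := by ring
    rw [k3]
    generalize 1 / (p:ℝ) * A = u1 at *
    generalize 1 / (p:ℝ) * K = u2 at *
    generalize ε * A = u3 at *
    generalize ε * K = u4 at *
    clear_value A K
    linarith only [k1, k2, hεA]
end

section
/- There exists N such that for all n ≥ N the following holds. Let G be any set of at most 2^{n/4} query functions g : {0,1}^n → {−1,+1}, and let P = {s ∈ {0,1}^n \ {0^n} : ¬⊕_s is 2^{−n/4}-independent from every g ∈ G}. Then |P| ≥ 2^n − 2^{3n/4+2} − 1 (in particular P is nonempty), and for every x ∈ X_n, the number of s ∈ P with s·x ≡ 0 (mod 2) is at most (1/2 + 1/2^{n/4−2})·|P|. Consequently, no matter which x ∈ X_n is output after the queries in G are answered by the value E_{y∈{0,1}^n}[g(y)], a secret s drawn uniformly from P satisfies s·x ≡ 0 with probability at most 1/2 + 1/2^{n/4−2}. -/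
/-- The positive set `S_s = {x ∈ {0,1}^n \ {0^n} : s·x ≡ 0 (mod 2)}` of the
negative parity predicate `¬⊕_s`. -/
def Spos (n : ℕ) (s : Fin n → ZMod 2) : Set (Fin n → ZMod 2) :=
  {x | x ≠ 0 ∧ ∑ i, s i * x i = 0}

/-- `¬⊕_s` is `ξ`-independent from the query function `g`. -/
def XiIndep2 (n : ℕ) (s : Fin n → ZMod 2) (g : (Fin n → ZMod 2) → ℝ) (ξ : ℝ) : Prop :=
  |expectOn (Spos n s) g - expectOn Set.univ g| ≤ ξ

noncomputable def chi (a : ZMod 2) : ℝ := if a = 0 then 1 else -1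

lemma zmod2_cases (a : ZMod 2) : a = 0 ∨ a = 1 := by
  revert a; decide

lemma chi_add (a b : ZMod 2) : chi (a + b) = chi a * chi b := by
  have h2 : (1 : ZMod 2) + 1 = 0 := by decide
  rcases zmod2_cases a with rfl | rfl <;> rcases zmod2_cases b with rfl | rfl <;>
    simp [chi, h2]

lemma sum_chi {n : ℕ} (x : Fin n → ZMod 2) (hx : x ≠ 0) :
    ∑ s : Fin n → ZMod 2, chi (∑ i, s i * x i) = 0 := by
  obtain ⟨i, hi⟩ := Function.ne_iff.mp hx
  have hi1 : x i = 1 := by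
    rcases zmod2_cases (x i) with h | h
    · exact absurd h hi
    · exact h
  have h := Fintype.sum_equiv (Equiv.addRight (Pi.single i (1 : ZMod 2)))
    (fun s : Fin n → ZMod 2 => - chi (∑ i, s i * x i)) (fun s => chi (∑ i, s i * x i)) (by
      intro s
      have : ∑ j, (Equiv.addRight (Pi.single i (1 : ZMod 2)) s) j * x j
          = ∑ j, s j * x j + 1 := by
        simp [add_mul, Finset.sum_add_distrib, Pi.single_apply, hi1]
      rw [this, chi_add]
      simp [chi])
  rw [Finset.sum_neg_distrib] at h
  linarith

lemma sum_chi' {n : ℕ} (s : Fin n → ZMod 2) (hs : s ≠ 0) :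
    ∑ x : Fin n → ZMod 2, chi (∑ i, s i * x i) = 0 := by
  rw [← sum_chi s hs]
  refine Finset.sum_congr rfl fun x _ => ?_
  simp only [mul_comm]

lemma card_cube (n : ℕ) : (Fintype.card (Fin n → ZMod 2) : ℝ) = 2 ^ n := by
  simp [ZMod.card]

noncomputable def TT {n : ℕ} (g : (Fin n → ZMod 2) → ℝ) (s : Fin n → ZMod 2) : ℝ :=
  ∑ x, g x * chi (∑ i, s i * x i)

lemma parseval {n : ℕ} (g : (Fin n → ZMod 2) → ℝ) :
    ∑ s, TT g s ^ 2 = 2 ^ n * ∑ x, g x ^ 2 := by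
  have h1 : ∀ s, TT g s ^ 2 = ∑ x, ∑ y, g x * g y * chi (∑ i, s i * (x + y) i) := by
    intro s
    rw [sq, TT, Finset.sum_mul_sum]
    refine Finset.sum_congr rfl fun x _ => Finset.sum_congr rfl fun y _ => ?_
    have : ∑ i, s i * (x + y) i = ∑ i, s i * x i + ∑ i, s i * y i := by
      simp [mul_add, Finset.sum_add_distrib]
    rw [this, chi_add]; ring
  simp_rw [h1]
  rw [Finset.sum_comm, Finset.mul_sum]
  refine Finset.sum_congr rfl fun x _ => ?_
  rw [Finset.sum_comm, Finset.sum_eq_single x]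
  · have hxx : x + x = 0 := by
      funext i
      have : ∀ a : ZMod 2, a + a = 0 := by decide
      exact this _
    rw [hxx]
    simp [chi]
    ring
  · intro y _ hy
    rw [← Finset.mul_sum, sum_chi, mul_zero]
    intro h
    apply hy
    funext i
    have h3 := congrFun h i
    have : ∀ a b : ZMod 2, a + b = 0 → b = a := by decide
    exact this _ _ h3
  · simp

open Classical in
lemma sum_Spos {n : ℕ} (s : Fin n → ZMod 2) (g : (Fin n → ZMod 2) → ℝ) :
    ∑ᶠ x ∈ Spos n s, g x = (∑ x, g x + TT g s) / 2 - g 0 := by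
  have h0 : Spos n s = ↑((Finset.univ.filter fun x : Fin n → ZMod 2 =>
      ∑ i, s i * x i = 0).erase 0) := by
    ext x; simp [Spos, and_comm]
  rw [h0, finsum_mem_coe_finset]
  have h1 := Finset.add_sum_erase (Finset.univ.filter fun x : Fin n → ZMod 2 =>
      ∑ i, s i * x i = 0) g (a := 0) (by simp)
  have h2 : ∑ x ∈ (Finset.univ.filter fun x : Fin n → ZMod 2 =>
      ∑ i, s i * x i = 0), g x = (∑ x, g x + TT g s) / 2 := by
    rw [Finset.sum_filter, TT, ← Finset.sum_add_distrib, Finset.sum_div]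
    refine Finset.sum_congr rfl fun x _ => ?_
    unfold chi
    split_ifs <;> ring
  linarith

lemma card_Spos {n : ℕ} (s : Fin n → ZMod 2) (hs : s ≠ 0) :
    ((Spos n s).ncard : ℝ) = 2 ^ n / 2 - 1 := by
  have h := sum_Spos s (fun _ => (1 : ℝ))
  have h1 : TT (fun _ => (1 : ℝ)) s = 0 := by
    simp only [TT, one_mul]; exact sum_chi' s hs
  rw [h1] at h
  have h2 : ∑ᶠ x ∈ Spos n s, (1 : ℝ) = (Spos n s).ncard := by
    rw [finsum_mem_eq_finite_toFinset_sum _ (Set.toFinite _), Set.ncard_eq_toFinset_card _ (Set.toFinite _)]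
    simp
  rw [h2] at h
  rw [h]
  simp [ZMod.card]

lemma bad_T {n : ℕ} (q : ℝ) (hq : 100 ≤ q) (hqn : q ^ 4 = 2 ^ n)
    (g : (Fin n → ZMod 2) → ℝ) (hg : ∀ x, g x = 1 ∨ g x = -1)
    (s : Fin n → ZMod 2) (hs : s ≠ 0) (hbad : ¬ XiIndep2 n s g q⁻¹) :
    q ^ 6 / 4 ≤ TT g s ^ 2 := by
  have hgabs : ∀ x, |g x| = 1 := by
    intro x; rcases hg x with h | h <;> simp [h]
  unfold XiIndep2 expectOn at hbad
  rw [sum_Spos, card_Spos s hs] at hbad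
  simp only [finsum_mem_univ, Set.ncard_univ, Nat.card_eq_fintype_card, card_cube] at hbad
  rw [finsum_eq_sum_of_fintype, ← hqn] at hbad
  have hA : |∑ x, g x| ≤ q ^ 4 := by
    refine (Finset.abs_sum_le_sum_abs _ _).trans ?_
    simp only [hgabs]
    rw [hqn, ← card_cube]; simp
  set A := ∑ x, g x
  set T := TT g s
  have hq0 : 0 < q := by linarith
  have hq4 : 100 ≤ q ^ 4 := by
    have : 1 ≤ q ^ 3 := one_le_pow₀ (by linarith)
    calc (100 : ℝ) ≤ q * 1 := by linarith
      _ ≤ q * q ^ 3 := by gcongr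
      _ = q ^ 4 := by ring
  have hden : 0 < q ^ 4 / 2 - 1 := by linarith
  have hg0 := hgabs 0
  have heq : ((A + T) / 2 - g 0) / (q ^ 4 / 2 - 1) - A / q ^ 4
      = (T / 2 + A / q ^ 4 - g 0) / (q ^ 4 / 2 - 1) := by
    have : q ^ 4 - 2 ≠ 0 := by linarith
    field_simp
    ring
  rw [heq, abs_div, abs_of_pos hden, not_le, lt_div_iff₀ hden] at hbad
  have hA2 : |A / q ^ 4| ≤ 1 := by
    rw [abs_div, abs_of_pos (by positivity : 0 < q ^ 4)]
    exact div_le_one_of_le₀ hA (by positivity)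
  have h3 : |T / 2 + A / q ^ 4 - g 0| ≤ |T| / 2 + 2 := by
    calc _ ≤ |T / 2 + A / q ^ 4| + |g 0| := abs_sub _ _
      _ ≤ |T / 2| + |A / q ^ 4| + |g 0| := by gcongr; exact abs_add_le _ _
      _ ≤ _ := by rw [abs_div, abs_two]; linarith
  have h4 : q⁻¹ * (q ^ 4 / 2 - 1) = q ^ 3 / 2 - q⁻¹ := by field_simp
  have h5 : q⁻¹ ≤ 1 := inv_le_one_of_one_le₀ (by linarith)
  have h6 : 100 ≤ q ^ 3 := by
    have : 1 ≤ q ^ 2 := one_le_pow₀ (by linarith)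
    calc (100 : ℝ) ≤ q * 1 := by linarith
      _ ≤ q * q ^ 2 := by gcongr
      _ = q ^ 3 := by ring
  have h7 : q ^ 3 / 2 ≤ |T| := by linarith
  rw [← sq_abs T]
  calc q ^ 6 / 4 = (q ^ 3 / 2) ^ 2 := by ring
    _ ≤ _ := by gcongr

open Classical in
lemma bad_card_s4 {n : ℕ} (q : ℝ) (hq : 100 ≤ q) (hqn : q ^ 4 = 2 ^ n)
    (g : (Fin n → ZMod 2) → ℝ) (hg : ∀ x, g x = 1 ∨ g x = -1) :
    ((Finset.univ.filter fun s : Fin n → ZMod 2 => s ≠ 0 ∧ ¬ XiIndep2 n s g q⁻¹).card : ℝ)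
      ≤ 4 * q ^ 2 := by
  set B := Finset.univ.filter fun s : Fin n → ZMod 2 => s ≠ 0 ∧ ¬ XiIndep2 n s g q⁻¹
  have h1 : (B.card : ℝ) * (q ^ 6 / 4) ≤ ∑ s ∈ B, TT g s ^ 2 := by
    rw [← nsmul_eq_mul]
    apply Finset.card_nsmul_le_sum
    intro s hs
    have := (Finset.mem_filter.mp hs).2
    exact bad_T q hq hqn g hg s this.1 this.2
  have h2 : ∑ s ∈ B, TT g s ^ 2 ≤ ∑ s, TT g s ^ 2 :=
    Finset.sum_le_sum_of_subset_of_nonneg (Finset.subset_univ _) (fun _ _ _ => sq_nonneg _)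
  have h3 : ∑ x, g x ^ 2 = q ^ 4 := by
    have : ∀ x, g x ^ 2 = 1 := by
      intro x; rcases hg x with h | h <;> simp [h]
    simp only [this]
    rw [hqn, ← card_cube]; simp
  rw [parseval, h3, ← hqn] at h2
  have hq0 : 0 < q ^ 6 := by
    have : 0 < q := by linarith
    positivity
  have h4 : (B.card : ℝ) * q ^ 6 ≤ (4 * q ^ 2) * q ^ 6 := by nlinarith
  exact le_of_mul_le_mul_right h4 hq0

/-- after at most `2^(n/4)` queries, each answered with the domain
average, the surviving candidate set `P` of negative parity predicates has at
least `2^n - 2^(3n/4+2) - 1` elements, and every nonzero point `x` satisfies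
`s·x = 0` for at most a `(1/2 + 2^(-(n/4-2)))` fraction of the `s ∈ P`. -/
theorem stmt4 : ∃ N : ℕ, ∀ n : ℕ, N ≤ n →
    ∀ G : Finset ((Fin n → ZMod 2) → ℝ),
    (∀ g ∈ G, ∀ x, g x = 1 ∨ g x = -1) →
    (G.card : ℝ) ≤ (2 : ℝ) ^ ((n : ℝ) / 4) →
    ∀ P : Set (Fin n → ZMod 2),
    P = {s | s ≠ 0 ∧ ∀ g ∈ G, XiIndep2 n s g ((2 : ℝ) ^ (-(n : ℝ) / 4))} →
    ((P.ncard : ℝ) ≥ (2 : ℝ) ^ (n : ℝ) - (2 : ℝ) ^ (3 * (n : ℝ) / 4 + 2) - 1) ∧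
    P.Nonempty ∧
    ∀ x : Fin n → ZMod 2, x ≠ 0 →
      (({s ∈ P | ∑ i, s i * x i = 0}).ncard : ℝ)
        ≤ (1 / 2 + 1 / (2 : ℝ) ^ ((n : ℝ) / 4 - 2)) * P.ncard := by
  classical
  refine ⟨40, fun n hn G hG hGc P hP => ?_⟩
  obtain ⟨q, hqdef⟩ : ∃ q : ℝ, q = (2 : ℝ) ^ ((n : ℝ) / 4) := ⟨_, rfl⟩
  have hq : 100 ≤ q := by
    rw [hqdef]
    have hn' : (40 : ℝ) ≤ n := by exact_mod_cast hn
    calc (100 : ℝ) ≤ (2 : ℝ) ^ (10 : ℝ) := by norm_num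
      _ ≤ _ := Real.rpow_le_rpow_of_exponent_le (by norm_num) (by linarith)
  have hq0 : 0 < q := by linarith
  have hqn : q ^ 4 = 2 ^ n := by
    rw [hqdef, ← Real.rpow_natCast, ← Real.rpow_mul (by norm_num), ← Real.rpow_natCast]
    congr 1; push_cast; ring
  have e1 : (2 : ℝ) ^ (-(n : ℝ) / 4) = q⁻¹ := by
    rw [hqdef, ← Real.rpow_neg (by norm_num)]; congr 1; ring
  have e2 : (2 : ℝ) ^ (n : ℝ) = q ^ 4 := by rw [hqn, Real.rpow_natCast]
  have e3 : (2 : ℝ) ^ (3 * (n : ℝ) / 4 + 2) = 4 * q ^ 3 := by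
    rw [hqdef, Real.rpow_add (by norm_num), ← Real.rpow_natCast _ 3,
      ← Real.rpow_mul (by norm_num), mul_comm]
    congr 1
    · norm_num
    · congr 1; push_cast; ring
  have e4 : 1 / (2 : ℝ) ^ ((n : ℝ) / 4 - 2) = 4 / q := by
    rw [hqdef, Real.rpow_sub (by norm_num)]
    norm_num
  rw [e1] at hP
  rw [← hqdef] at hGc
  rw [e2, e3, e4]
  have hcard : (P.ncard : ℝ) ≥ q ^ 4 - 4 * q ^ 3 - 1 := by
    let B := fun g => Finset.univ.filter fun s : Fin n → ZMod 2 => s ≠ 0 ∧ ¬ XiIndep2 n s g q⁻¹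
    have hcov : (Finset.univ : Finset (Fin n → ZMod 2)) ⊆ P.toFinset ∪ ({0} ∪ G.biUnion B) := by
      intro s _
      simp only [Finset.mem_union, Set.mem_toFinset, Finset.mem_singleton, Finset.mem_biUnion, hP,
        Set.mem_setOf_eq, B, Finset.mem_filter, Finset.mem_univ, true_and]
      by_cases h0 : s = 0
      · exact Or.inr (Or.inl h0)
      · by_cases h1 : ∀ g ∈ G, XiIndep2 n s g q⁻¹
        · exact Or.inl ⟨h0, h1⟩
        · push Not at h1
          obtain ⟨g, hg, h⟩ := h1
          exact Or.inr (Or.inr ⟨g, hg, h0, h⟩)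
    have hB : ((G.biUnion B).card : ℝ) ≤ 4 * q ^ 3 := by
      calc ((G.biUnion B).card : ℝ) ≤ ∑ g ∈ G, ((B g).card : ℝ) := by
            exact_mod_cast Finset.card_biUnion_le
        _ ≤ ∑ g ∈ G, 4 * q ^ 2 := Finset.sum_le_sum fun g hg => bad_card_s4 q hq hqn g (hG g hg)
        _ = G.card * (4 * q ^ 2) := by simp
        _ ≤ q * (4 * q ^ 2) := by gcongr
        _ = _ := by ring
    have h1 := Finset.card_le_card hcov
    have h2 := h1.trans ((Finset.card_union_le _ _).trans
      (Nat.add_le_add_left (Finset.card_union_le _ _) _))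
    rw [Finset.card_univ, Finset.card_singleton] at h2
    have h3 : (Fintype.card (Fin n → ZMod 2) : ℝ) ≤
      P.toFinset.card + (1 + (G.biUnion B).card) := by exact_mod_cast h2
    rw [card_cube, ← hqn] at h3
    rw [Set.ncard_eq_toFinset_card']
    linarith
  have hq3 : 100 ≤ q ^ 3 := by
    have : 1 ≤ q ^ 2 := one_le_pow₀ (by linarith)
    calc (100 : ℝ) ≤ q * 1 := by linarith
      _ ≤ q * q ^ 2 := by gcongr
      _ = q ^ 3 := by ring
  have hq4 : 100 * q ^ 3 ≤ q ^ 4 := by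
    calc 100 * q ^ 3 ≤ q * q ^ 3 := by gcongr
      _ = q ^ 4 := by ring
  refine ⟨hcard, ?_, ?_⟩
  · apply Set.nonempty_of_ncard_ne_zero
    intro h
    rw [h] at hcard
    push_cast at hcard
    linarith
  · intro x hx
    have hsub : {s ∈ P | ∑ i, s i * x i = 0} ⊆ Spos n x := by
      rintro s ⟨hs, h⟩
      rw [hP] at hs
      refine ⟨hs.1, ?_⟩
      rw [← h]
      exact Finset.sum_congr rfl fun i _ => mul_comm _ _
    have h1 : (({s ∈ P | ∑ i, s i * x i = 0}).ncard : ℝ) ≤ (Spos n x).ncard := by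
      exact_mod_cast Set.ncard_le_ncard hsub (Set.toFinite _)
    rw [card_Spos x hx, ← hqn] at h1
    refine h1.trans ?_
    calc q ^ 4 / 2 - 1 ≤ (1 / 2 + 4 / q) * (q ^ 4 - 4 * q ^ 3 - 1) := by
          have : (1 / 2 + 4 / q) * (q ^ 4 - 4 * q ^ 3 - 1)
            = q ^ 4 / 2 + 2 * q ^ 3 - 16 * q ^ 2 - 1 / 2 - 4 * q⁻¹ := by
            field_simp
            ring
          rw [this]
          have h5 : q⁻¹ ≤ 1 := inv_le_one_of_one_le₀ (by linarith)
          have h6 : 100 * q ^ 2 ≤ q ^ 3 := by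
            calc 100 * q ^ 2 ≤ q * q ^ 2 := by gcongr
              _ = q ^ 3 := by ring
          have h7 : 0 ≤ q ^ 2 := sq_nonneg q
          linarith
      _ ≤ _ := by gcongr
end
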